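/- arXiv:2602.17115 — 3 statements merged into one kernel-verified Lean document; each statement's English description precedes it below -/
import Mathlib

section
/- Let T and S be n×n real matrices such that every row of T has at most d_T nonzero entries and every row of S has at most d_S nonzero entries, and suppose ‖T − S‖_F ≤ τ. Then for any positive integer L₁, any coefficients θ_1,…,θ_{L₁} ∈ R, any row index j ∈ {1,…,n}, and any x ∈ [0,1]^{n×d}: |( Σ_{i=1}^{L₁} θ_i (T^i − S^i) x )_{j,·}|_∞ ≤ τ √(d_T + d_S) · Σ_{i=1}^{L₁} i |θ_i| ( ‖T‖_{1,∞} ∨ ‖S‖_{1,∞} )^{i−1}. -/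
/-!
Write `m` for the larger of the two row-sum norms and `K = τ √(dT + dS)`. A matrix whose
absolute row sums are at most `r` maps vectors with entries bounded by `C` to vectors with entries
bounded by `r * C` (`abs_mulVec_le`). A row of `T - S` has at most `dT + dS` nonzero entries, so
Cauchy–Schwarz on its support bounds its absolute sum by `K` (`sum_abs_sub_le`). The recursion
`T ^ (k + 1) - S ^ (k + 1) = T (T ^ k - S ^ k) + (T - S) S ^ k` then gives, by induction, that
`(T ^ k - S ^ k) v` has entries at most `k K m ^ (k - 1)` whenever `v` has entries at most `1`;
the theorem is the weighted sum of these bounds over `k`, applied to a column of `x`.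
-/


open Finset

/-- Maximum absolute row sum `‖M‖_{1,∞}`. -/
noncomputable def rowSumNorm {n m : ℕ} (M : Matrix (Fin n) (Fin m) ℝ) : ℝ :=
  ⨆ i, ∑ j, |M i j|

/-- Frobenius norm `‖M‖_F`. -/
noncomputable def frobNorm {n m : ℕ} (M : Matrix (Fin n) (Fin m) ℝ) : ℝ :=
  Real.sqrt (∑ i, ∑ j, (M i j) ^ 2)

/-- Every row of `M` has at most `k` nonzero entries. -/
def RowSparsity {n m : ℕ} (M : Matrix (Fin n) (Fin m) ℝ) (k : ℕ) : Prop :=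
  ∀ i, ({j | M i j ≠ 0} : Set (Fin m)).ncard ≤ k

open Matrix in
lemma abs_mulVec_le {n m : ℕ} (M : Matrix (Fin n) (Fin m) ℝ) (v : Fin m → ℝ) {r C : ℝ}
    (hC : 0 ≤ C) (i : Fin n) (hM : ∑ j, |M i j| ≤ r) (hv : ∀ j, |v j| ≤ C) :
    |(M *ᵥ v) i| ≤ r * C := by
  calc |(M *ᵥ v) i| = |∑ j, M i j * v j| := rfl
    _ ≤ ∑ j, |M i j * v j| := Finset.abs_sum_le_sum_abs _ _
    _ ≤ ∑ j, |M i j| * C := by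
        refine Finset.sum_le_sum fun j _ => ?_
        rw [abs_mul]
        exact mul_le_mul_of_nonneg_left (hv j) (abs_nonneg _)
    _ = (∑ j, |M i j|) * C := (Finset.sum_mul _ _ _).symm
    _ ≤ r * C := mul_le_mul_of_nonneg_right hM hC

lemma sum_abs_le_rowSumNorm {n m : ℕ} (M : Matrix (Fin n) (Fin m) ℝ) (i : Fin n) :
    ∑ j, |M i j| ≤ rowSumNorm M :=
  le_ciSup (f := fun i => ∑ j, |M i j|) (Set.finite_range _).bddAbove i

lemma sum_abs_sub_le {n m : ℕ} {T S : Matrix (Fin n) (Fin m) ℝ} {dT dS : ℕ} {τ : ℝ}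
    (hT : RowSparsity T dT) (hS : RowSparsity S dS) (hF : frobNorm (T - S) ≤ τ) (i : Fin n) :
    ∑ j, |(T - S) i j| ≤ τ * Real.sqrt (dT + dS) := by
  set D := T - S with hD
  set s : Finset (Fin m) := {j | D i j ≠ 0} with hs
  have hcard : (s.card : ℝ) ≤ dT + dS := by
    have h : (s : Set (Fin m)) ⊆ {j | T i j ≠ 0} ∪ {j | S i j ≠ 0} := by
      intro j hj
      simp only [hs, hD, Finset.coe_filter, Finset.mem_univ, true_and, Set.mem_setOf_eq,
        Matrix.sub_apply] at hj
      by_contra hc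
      simp only [Set.mem_union, Set.mem_setOf_eq, not_or, not_not] at hc
      exact hj (by rw [hc.1, hc.2, sub_zero])
    have h2 := (Set.ncard_le_ncard h (Set.toFinite _)).trans (Set.ncard_union_le _ _)
    rw [Set.ncard_coe_finset] at h2
    have h3 : s.card ≤ dT + dS := h2.trans (add_le_add (hT i) (hS i))
    exact_mod_cast h3
  have hsum : ∑ j, |D i j| = ∑ j ∈ s, |D i j| := by
    refine (Finset.sum_subset (Finset.subset_univ s) fun j _ hj => ?_).symm
    simpa [hs] using hj
  have hrow : ∑ j ∈ s, |D i j| ^ 2 ≤ ∑ a, ∑ b, D a b ^ 2 := by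
    simp only [sq_abs]
    calc ∑ j ∈ s, D i j ^ 2 ≤ ∑ j, D i j ^ 2 :=
          Finset.sum_le_univ_sum_of_nonneg fun j => sq_nonneg _
      _ ≤ ∑ a, ∑ b, D a b ^ 2 :=
          Finset.single_le_sum (f := fun a => ∑ b, D a b ^ 2)
            (fun a _ => Finset.sum_nonneg fun b _ => sq_nonneg _) (Finset.mem_univ i)
  have hQ : 0 ≤ ∑ j ∈ s, |D i j| ^ 2 := Finset.sum_nonneg fun j _ => sq_nonneg _
  calc ∑ j, |D i j| = ∑ j ∈ s, |D i j| := hsum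
    _ ≤ Real.sqrt ((∑ a, ∑ b, D a b ^ 2) * (dT + dS)) := by
        refine Real.le_sqrt_of_sq_le ?_
        calc (∑ j ∈ s, |D i j|) ^ 2 ≤ s.card * ∑ j ∈ s, |D i j| ^ 2 :=
              sq_sum_le_card_mul_sum_sq
          _ ≤ (dT + dS) * ∑ a, ∑ b, D a b ^ 2 :=
              mul_le_mul hcard hrow hQ (by positivity)
          _ = _ := mul_comm _ _
    _ = frobNorm D * Real.sqrt (dT + dS) := Real.sqrt_mul (hQ.trans hrow) _
    _ ≤ τ * Real.sqrt (dT + dS) := mul_le_mul_of_nonneg_right hF (Real.sqrt_nonneg _)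

open Matrix in
lemma abs_pow_mulVec_le {n : ℕ} {S : Matrix (Fin n) (Fin n) ℝ} {m : ℝ} (hm : 0 ≤ m)
    (hS : ∀ i, ∑ j, |S i j| ≤ m) {v : Fin n → ℝ} (hv : ∀ i, |v i| ≤ 1) (k : ℕ) :
    ∀ i, |(S ^ k *ᵥ v) i| ≤ m ^ k := by
  induction k with
  | zero => simpa using hv
  | succ k ih =>
    intro i
    rw [pow_succ', ← mulVec_mulVec, pow_succ']
    exact abs_mulVec_le S _ (by positivity) i (hS i) ih

open Matrix in
lemma abs_pow_sub_pow_mulVec_le {n : ℕ} {T S : Matrix (Fin n) (Fin n) ℝ} {m K : ℝ}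
    (hm : 0 ≤ m) (hK : 0 ≤ K) (hT : ∀ i, ∑ j, |T i j| ≤ m) (hS : ∀ i, ∑ j, |S i j| ≤ m)
    (hD : ∀ i, ∑ j, |(T - S) i j| ≤ K) {v : Fin n → ℝ} (hv : ∀ i, |v i| ≤ 1) (k : ℕ) :
    ∀ i, |((T ^ k - S ^ k) *ᵥ v) i| ≤ k * K * m ^ (k - 1) := by
  induction k with
  | zero => simp
  | succ k ih =>
    intro i
    have hsplit : (T ^ (k + 1) - S ^ (k + 1)) *ᵥ v
        = T *ᵥ ((T ^ k - S ^ k) *ᵥ v) + (T - S) *ᵥ (S ^ k *ᵥ v) := by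
      rw [mulVec_mulVec, mulVec_mulVec, ← add_mulVec, pow_succ', pow_succ']
      congr 1
      noncomm_ring
    have h1 := abs_mulVec_le T _ (by positivity) i (hT i) ih
    have h2 := abs_mulVec_le (T - S) _ (by positivity) i (hD i) (abs_pow_mulVec_le hm hS hv k)
    -- for `k = 0` the truncated exponent `k - 1` is harmless because of the factor `k`
    have h3 : m * (k * K * m ^ (k - 1)) = k * K * m ^ k := by
      rcases k with _ | k
      · simp
      · rw [Nat.add_sub_cancel, pow_succ]; ring
    rw [hsplit, Pi.add_apply]
    refine (abs_add_le _ _).trans ((add_le_add h1 h2).trans (le_of_eq ?_))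
    rw [h3, Nat.add_sub_cancel]
    push_cast
    ring

/-- mismatch bound for polynomial graph filters. If `T`, `S` have row sparsity
at most `d_T`, `d_S` and `‖T − S‖_F ≤ τ`, then for any coefficients `θ`, any row `j` and any
`x ∈ [0,1]^{n×d}`,
`|(Σ_{i=1}^{L₁} θ_i (T^i − S^i)x)_{j,·}|_∞ ≤ τ√(d_T+d_S) Σ_{i=1}^{L₁} i|θ_i| (‖T‖_{1,∞} ∨ ‖S‖_{1,∞})^{i−1}`. -/
theorem stmt_5 (n d : ℕ) (T S : Matrix (Fin n) (Fin n) ℝ) (dT dS : ℕ) (τ : ℝ)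
    (hT : RowSparsity T dT) (hS : RowSparsity S dS)
    (hF : frobNorm (T - S) ≤ τ)
    (L₁ : ℕ) (hL₁ : 0 < L₁) (θ : ℕ → ℝ) (j : Fin n)
    (x : Matrix (Fin n) (Fin d) ℝ) (hx : ∀ a b, x a b ∈ Set.Icc (0 : ℝ) 1) :
    ∀ c : Fin d,
      |(∑ i ∈ Finset.Icc 1 L₁, θ i • ((T ^ i - S ^ i) * x)) j c| ≤
        τ * Real.sqrt (dT + dS) *
          ∑ i ∈ Finset.Icc 1 L₁,
            (i : ℝ) * |θ i| * (max (rowSumNorm T) (rowSumNorm S)) ^ (i - 1) := by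
  intro c
  have hm : 0 ≤ max (rowSumNorm T) (rowSumNorm S) :=
    le_max_of_le_left
      ((Finset.sum_nonneg fun _ _ => abs_nonneg _).trans (sum_abs_le_rowSumNorm T j))
  have hτ : 0 ≤ τ := (Real.sqrt_nonneg _).trans hF
  have hv : ∀ a, |x a c| ≤ 1 := fun a => by
    rw [abs_of_nonneg (hx a c).1]
    exact (hx a c).2
  rw [Matrix.sum_apply, Finset.mul_sum]
  refine (Finset.abs_sum_le_sum_abs _ _).trans (Finset.sum_le_sum fun i _ => ?_)
  have h := abs_pow_sub_pow_mulVec_le (K := τ * Real.sqrt (dT + dS)) hm (by positivity)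
    (fun a => (sum_abs_le_rowSumNorm T a).trans (le_max_left _ _))
    (fun a => (sum_abs_le_rowSumNorm S a).trans (le_max_right _ _))
    (sum_abs_sub_le hT hS hF) hv i j
  have hcol : ((T ^ i - S ^ i) * x) j c
      = Matrix.mulVec (T ^ i - S ^ i) (fun a => x a c) j := rfl
  rw [Matrix.smul_apply, smul_eq_mul, abs_mul, hcol]
  refine (mul_le_mul_of_nonneg_left h (abs_nonneg (θ i))).trans (le_of_eq ?_)
  ring
end

section
/- Fix a matrix X ∈ R^{n×d} and let ω_1,…,ω_n be i.i.d. Bernoulli(π) random variables with π ∈ (0,1]. Let f* be a function and G a countable class of functions, all mapping R^{n×d} to R^n with components bounded: ‖f_i‖_∞ ≤ F for all i and all f ∈ G ∪ {f*}, with F ≥ 1, and suppose log|G| ≥ 1. Then with probability at least 1 − 2/|G|, simultaneously for every f ∈ G satisfying π n ‖f − f*‖_n² > 3600 F² log|G|, it holds that ‖f − f*‖²_{n,ω} ≥ π ‖f − f*‖²_n / 2. -/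
/-!
For a fixed `f`, put `a i = (f X i - fstar X i) ^ 2 ∈ [0, 4F²]` and `S = ∑ a i`. The Chernoff bound
for the lower tail of `∑ ω i * a i` with parameter `t = 1 / (16F²)` works because `t * a i ≤ 1/4`
and `exp (-x) ≤ 1 - 3x/4` on `[0, 1/4]`: each factor of the Laplace transform satisfies
`E exp (-t ω a) ≤ exp (-(3/4) π t a)`, so that
`P(∑ ω i * a i < π S / 2) ≤ exp (-π t S / 4) = exp (-π S / (64F²))` (`chernoff_lower`).
If `π S > 3600 F² log |G|`, this is at most `exp (-2 log |G|) = 1 / |G|²`, and a union bound over `G`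
leaves a failure probability of at most `1 / |G| ≤ 2 / |G|`.
-/

open MeasureTheory Finset

noncomputable section

/-- Bernoulli(π) distribution on ℝ: mass `π` at `1` and `1−π` at `0`. -/
def bern (p : ℝ) : Measure ℝ :=
  ENNReal.ofReal p • Measure.dirac 1 + ENNReal.ofReal (1 - p) • Measure.dirac 0

lemma bern_isProbabilityMeasure {p : ℝ} (h0 : 0 ≤ p) (h1 : p ≤ 1) :
    IsProbabilityMeasure (bern p) := by
  constructor
  simp only [bern, Measure.coe_add, Measure.coe_smul, Pi.add_apply, Pi.smul_apply, measure_univ,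
    smul_eq_mul, mul_one]
  rw [← ENNReal.ofReal_add h0 (by linarith)]
  simp

lemma integrable_bern (p : ℝ) (g : ℝ → ℝ) : Integrable g (bern p) := by
  unfold bern
  exact ((integrable_dirac (by simp)).smul_measure (by simp)).add_measure
    ((integrable_dirac (by simp)).smul_measure (by simp))

lemma integral_bern {p : ℝ} (h0 : 0 ≤ p) (h1 : p ≤ 1) (g : ℝ → ℝ) :
    ∫ x, g x ∂(bern p) = p * g 1 + (1 - p) * g 0 := by
  unfold bern
  rw [integral_add_measure ((integrable_dirac (by simp)).smul_measure (by simp))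
    ((integrable_dirac (by simp)).smul_measure (by simp))]
  simp [integral_smul_measure, ENNReal.toReal_ofReal, h0, h1]

lemma exp_neg_le_of_le_quarter {x : ℝ} (h0 : 0 ≤ x) (h1 : x ≤ 1 / 4) :
    Real.exp (-x) ≤ 1 - 3 / 4 * x := by
  rw [Real.exp_neg]
  have h2 : 1 + x ≤ Real.exp x := by linarith [Real.add_one_le_exp x]
  rw [inv_le_iff_one_le_mul₀ (Real.exp_pos x)]
  nlinarith

/-- Laplace transform of a scaled Bernoulli variable at a small parameter. -/
lemma laplace_bern_le {p x : ℝ} (hp0 : 0 ≤ p) (hp1 : p ≤ 1) (h0 : 0 ≤ x) (h1 : x ≤ 1 / 4) :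
    ∫ w, Real.exp (-(w * x)) ∂(bern p) ≤ Real.exp (-(3 / 4 * p * x)) := by
  rw [integral_bern hp0 hp1]
  have h2 := exp_neg_le_of_le_quarter h0 h1
  have h3 := Real.add_one_le_exp (-(3 / 4 * p * x))
  simp only [one_mul, zero_mul, neg_zero, Real.exp_zero]
  nlinarith

/-- Chernoff bound for the lower tail of a weighted sum of i.i.d. Bernoulli variables, with a
parameter `t` that is small compared to the inverse weights. -/
lemma chernoff_lower {n : ℕ} {p t : ℝ} (hp0 : 0 ≤ p) (hp1 : p ≤ 1) (ht : 0 ≤ t) (a : Fin n → ℝ)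
    (ha0 : ∀ i, 0 ≤ a i) (ha1 : ∀ i, t * a i ≤ 1 / 4) :
    (Measure.pi fun _ : Fin n => bern p) {ω | ∑ i, ω i * a i < p * (∑ i, a i) / 2} ≤
      ENNReal.ofReal (Real.exp (-(p * t * (∑ i, a i) / 4))) := by
  have := bern_isProbabilityMeasure hp0 hp1
  set μ := Measure.pi fun _ : Fin n => bern p with hμ
  set S := ∑ i, a i with hS
  let g : (Fin n → ℝ) → ℝ := fun ω => ∏ i, Real.exp (-(ω i * (t * a i)))
  have hg (ω) : g ω = Real.exp (-(t * ∑ i, ω i * a i)) := by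
    simp only [g]
    rw [← Real.exp_sum, Finset.mul_sum, ← Finset.sum_neg_distrib]
    congr 1
    exact Finset.sum_congr rfl fun i _ => by ring
  have hint : Integrable g μ :=
    Integrable.fintype_prod (f := fun i (w : ℝ) => Real.exp (-(w * (t * a i))))
      fun i => integrable_bern p _
  have hle : ∫ ω, g ω ∂μ ≤ Real.exp (-(3 / 4 * p * t * S)) := by
    simp only [g]
    rw [hμ, integral_fintype_prod_eq_prod (fun i (w : ℝ) => Real.exp (-(w * (t * a i))))]
    calc _ ≤ ∏ i, Real.exp (-(3 / 4 * p * (t * a i))) :=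
          Finset.prod_le_prod (fun i _ => integral_nonneg fun w => (Real.exp_pos _).le)
            fun i _ => laplace_bern_le hp0 hp1 (mul_nonneg ht (ha0 i)) (ha1 i)
      _ = _ := by
          rw [← Real.exp_sum, hS, Finset.mul_sum, ← Finset.sum_neg_distrib]
          congr 1
          exact Finset.sum_congr rfl fun i _ => by ring
  have hmarkov := mul_meas_ge_le_integral_of_nonneg
    (Filter.Eventually.of_forall fun ω => by rw [hg]; exact (Real.exp_pos _).le) hint
    (Real.exp (-(t * (p * S / 2))))
  have hsub : {ω : Fin n → ℝ | ∑ i, ω i * a i < p * S / 2} ⊆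
      {ω | Real.exp (-(t * (p * S / 2))) ≤ g ω} := by
    intro ω hω
    simp only [Set.mem_ofPred_eq] at hω ⊢
    rw [hg]
    exact Real.exp_le_exp.2 (neg_le_neg (mul_le_mul_of_nonneg_left hω.le ht))
  refine (measure_mono hsub).trans ?_
  rw [← ofReal_measureReal]
  refine ENNReal.ofReal_le_ofReal ?_
  have h4 : Real.exp (-(3 / 4 * p * t * S)) =
      Real.exp (-(t * (p * S / 2))) * Real.exp (-(p * t * S / 4)) := by
    rw [← Real.exp_add]; congr 1; ring
  exact le_of_mul_le_mul_left ((hmarkov.trans hle).trans h4.le) (Real.exp_pos _)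

/-- with probability at least `1 − 2/|G|` over i.i.d. Bernoulli(π) masking
variables `ω₁,…,ω_n`, simultaneously for every `f` in the finite class `G` with
`πn‖f−f*‖_n² > 3600F²log|G|`, one has `‖f−f*‖²_{n,ω} ≥ π‖f−f*‖²_n/2`. -/
theorem stmt_7 (n d : ℕ) (hn : 1 ≤ n) (π : ℝ) (hπ₀ : 0 < π) (hπ₁ : π ≤ 1)
    (X : Fin n → Fin d → ℝ)
    (G : Finset ((Fin n → Fin d → ℝ) → Fin n → ℝ))
    (fstar : (Fin n → Fin d → ℝ) → Fin n → ℝ)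
    (F : ℝ) (hF : 1 ≤ F)
    (hbdG : ∀ f ∈ G, ∀ (x : Fin n → Fin d → ℝ) (i : Fin n), |f x i| ≤ F)
    (hbdstar : ∀ (x : Fin n → Fin d → ℝ) (i : Fin n), |fstar x i| ≤ F)
    (hlog : 1 ≤ Real.log G.card) :
    ENNReal.ofReal (1 - 2 / (G.card : ℝ)) ≤
      (Measure.pi fun _ : Fin n => bern π) {ω : Fin n → ℝ |
        ∀ f ∈ G,
          π * n * ((1 / (n : ℝ)) * ∑ i, (f X i - fstar X i) ^ 2) >
              3600 * F ^ 2 * Real.log G.card →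
            π * ((1 / (n : ℝ)) * ∑ i, (f X i - fstar X i) ^ 2) / 2 ≤
              (1 / (n : ℝ)) * ∑ i, ω i * (f X i - fstar X i) ^ 2} := by
  classical
  have := bern_isProbabilityMeasure hπ₀.le hπ₁
  set μ := Measure.pi fun _ : Fin n => bern π with hμ
  have hn0 : (0 : ℝ) < n := by exact_mod_cast hn
  have hF0 : (0 : ℝ) < F ^ 2 := by positivity
  set N : ℝ := (G.card : ℝ) with hN
  have hN0 : 0 < N := by
    rcases Nat.eq_zero_or_pos G.card with h | h
    · rw [hN, h] at hlog; norm_num at hlog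
    · rw [hN]; exact_mod_cast h
  let a : ((Fin n → Fin d → ℝ) → Fin n → ℝ) → Fin n → ℝ := fun f i => (f X i - fstar X i) ^ 2
  let H := G.filter fun f => 3600 * F ^ 2 * Real.log N < π * ∑ i, a f i
  let B : ((Fin n → Fin d → ℝ) → Fin n → ℝ) → Set (Fin n → ℝ) :=
    fun f => {ω | ∑ i, ω i * a f i < π * (∑ i, a f i) / 2}
  have hB : ∀ f ∈ H, μ (B f) ≤ ENNReal.ofReal (1 / N ^ 2) := by
    intro f hf
    obtain ⟨hfG, hfl⟩ := Finset.mem_filter.1 hf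
    refine (chernoff_lower (t := 1 / (16 * F ^ 2)) hπ₀.le hπ₁ (by positivity) (a f)
      (fun i => sq_nonneg _) fun i => ?_).trans (ENNReal.ofReal_le_ofReal ?_)
    · have h1 := abs_le.1 (hbdG f hfG X i)
      have h2 := abs_le.1 (hbdstar X i)
      have h3 : a f i ≤ 4 * F ^ 2 := by
        have : (f X i - fstar X i) ^ 2 ≤ (2 * F) ^ 2 :=
          sq_le_sq' (by linarith) (by linarith)
        simp only [a]; linarith
      rw [div_mul_eq_mul_div, one_mul, div_le_iff₀ (by positivity)]
      linarith
    · have h5 : 1 / N ^ 2 = Real.exp (-(2 * Real.log N)) := by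
        rw [Real.exp_neg, two_mul, Real.exp_add, Real.exp_log hN0, one_div, sq]
      rw [h5, Real.exp_le_exp]
      have h6 : π * (1 / (16 * F ^ 2)) * (∑ i, a f i) / 4 = (π * ∑ i, a f i) / (64 * F ^ 2) := by
        field_simp
        ring
      rw [h6, neg_le_neg_iff, le_div_iff₀ (by positivity)]
      nlinarith
  set A := {ω : Fin n → ℝ | ∀ f ∈ G,
          π * n * ((1 / (n : ℝ)) * ∑ i, (f X i - fstar X i) ^ 2) >
              3600 * F ^ 2 * Real.log N →
            π * ((1 / (n : ℝ)) * ∑ i, (f X i - fstar X i) ^ 2) / 2 ≤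
              (1 / (n : ℝ)) * ∑ i, ω i * (f X i - fstar X i) ^ 2} with hA
  have hsub : Aᶜ ⊆ ⋃ f ∈ H, B f := by
    intro ω hω
    simp only [hA, Set.mem_compl_iff, Set.mem_ofPred_eq, not_forall, not_le] at hω
    obtain ⟨f, hfG, hfl, hlt⟩ := hω
    have e1 : π * n * ((1 / (n : ℝ)) * ∑ i, (f X i - fstar X i) ^ 2) = π * ∑ i, a f i := by
      simp only [a]; field_simp
    rw [e1] at hfl
    refine Set.mem_biUnion (Finset.mem_coe.2 (Finset.mem_filter.2 ⟨hfG, hfl⟩)) ?_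
    have e2 : π * ((1 / (n : ℝ)) * ∑ i, (f X i - fstar X i) ^ 2) / 2
        = (1 / (n : ℝ)) * (π * (∑ i, a f i) / 2) := by
      simp only [a]; ring
    rw [e2] at hlt
    exact lt_of_mul_lt_mul_left hlt (by positivity)
  have hbad : μ Aᶜ ≤ ENNReal.ofReal (2 / N) := by
    calc μ Aᶜ ≤ ∑ f ∈ H, μ (B f) := (measure_mono hsub).trans (measure_biUnion_finset_le _ _)
      _ ≤ ∑ f ∈ H, ENNReal.ofReal (1 / N ^ 2) := Finset.sum_le_sum hB
      _ ≤ ∑ f ∈ G, ENNReal.ofReal (1 / N ^ 2) :=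
          Finset.sum_le_sum_of_subset (Finset.filter_subset _ _)
      _ = ENNReal.ofReal (N * (1 / N ^ 2)) := by
          rw [Finset.sum_const, nsmul_eq_mul, ENNReal.ofReal_mul hN0.le, hN, ENNReal.ofReal_natCast]
      _ ≤ ENNReal.ofReal (2 / N) := by
          refine ENNReal.ofReal_le_ofReal ?_
          have : N * (1 / N ^ 2) = 1 / N := by field_simp
          rw [this]
          gcongr
          norm_num
  -- Subadditivity on `A ∪ Aᶜ` needs no measurability of `A`.
  have huniv : 1 ≤ μ A + μ Aᶜ := by
    have h := measure_union_le (μ := μ) A Aᶜ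
    rwa [Set.union_compl_self, measure_univ] at h
  rw [ENNReal.ofReal_sub _ (by positivity), ENNReal.ofReal_one]
  exact tsub_le_iff_right.2 (huniv.trans (by gcongr))

end
end

section
/- Let a, b, c, d be positive real numbers satisfying |a − b| ≤ 2c√a + d. Then for every ε ∈ (0,1]: (1−ε)·b − d − c²/ε ≤ a ≤ (1+ε)·(b + d) + ((1+ε)²/ε)·c². -/
/-!
Both bounds come from removing `√a` with the weighted AM-GM inequality `2x√a ≤ εa + x²/ε`.
With `x = c`, `b ≤ a + d + 2c√a` becomes `b ≤ (1+ε)a + d + c²/ε`, and multiplying by `1-ε` gives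
the lower bound. With `x = (1+ε)c`, `(1+ε)a ≤ (1+ε)(b + d + 2c√a)` becomes the upper bound once
`εa` cancels.
-/

/-- If positive reals `a, b, c, d` satisfy `|a - b| ≤ 2c√a + d`, then for every
`ε ∈ (0,1]`, `(1-ε)·b - d - c²/ε ≤ a ≤ (1+ε)·(b+d) + ((1+ε)²/ε)·c²`. -/
theorem stmt_13 (a b c d : ℝ) (ha : 0 < a) (hb : 0 < b) (hc : 0 < c) (hd : 0 < d)
    (h : |a - b| ≤ 2 * c * Real.sqrt a + d) :
    ∀ ε : ℝ, 0 < ε → ε ≤ 1 →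
      (1 - ε) * b - d - c ^ 2 / ε ≤ a ∧
        a ≤ (1 + ε) * (b + d) + ((1 + ε) ^ 2 / ε) * c ^ 2 := by
  intro ε hε hε1
  have hs : Real.sqrt a ^ 2 = a := Real.sq_sqrt ha.le
  obtain ⟨h1, h2⟩ := abs_le.mp h
  -- Weighted AM-GM; used with `x = c` for the lower bound, `x = (1 + ε) c` for the upper one.
  have young : ∀ x : ℝ, 2 * x * Real.sqrt a ≤ ε * a + x ^ 2 / ε := by
    intro x
    have key : ε * a + x ^ 2 / ε - 2 * x * Real.sqrt a = (ε * Real.sqrt a - x) ^ 2 / ε := by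
      field_simp
      linear_combination (-ε ^ 2) * hs
    have : 0 ≤ (ε * Real.sqrt a - x) ^ 2 / ε := by positivity
    linarith
  constructor
  · have hK : 0 ≤ c ^ 2 / ε := by positivity
    have hb' : b ≤ (1 + ε) * a + d + c ^ 2 / ε := by linarith [young c]
    -- Multiply by `1 - ε ≥ 0` and use `(1 - ε)(1 + ε) ≤ 1`.
    have hm := mul_le_mul_of_nonneg_left hb' (sub_nonneg.mpr hε1)
    have e1 : 0 ≤ ε ^ 2 * a := by positivity
    have e2 : 0 ≤ ε * d := by positivity
    have e3 : 0 ≤ ε * (c ^ 2 / ε) := by positivity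
    linarith
  · have hy := young ((1 + ε) * c)
    have hm : (1 + ε) * a ≤ (1 + ε) * (b + d + 2 * c * Real.sqrt a) :=
      mul_le_mul_of_nonneg_left (by linarith) (by linarith)
    have e : ((1 + ε) * c) ^ 2 / ε = (1 + ε) ^ 2 / ε * c ^ 2 := by ring
    linarith
end
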